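/- arXiv:2406.14771 — 3 statements merged into one kernel-verified Lean document; each statement's English description precedes it below -/
import Mathlib

section
/- Let X be a nonempty Tychonoff (completely regular T1) space with no isolated points which is strongly n-homogeneous for every positive integer n. Then Hom_p(X) is not a topological group (i.e., it is not the case that composition is jointly continuous and inversion is continuous). -/
open Topology

/-- The topology of pointwise convergence on the group of self-homeomorphisms of `X`,
induced by the inclusion of `Hom(X)` into the product space `X → X`. -/
def homPTop (X : Type*) [TopologicalSpace X] : TopologicalSpace (X ≃ₜ X) :=
  TopologicalSpace.induced (fun f => (f : X → X)) inferInstance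

/-- A space `X` is strongly `n`-homogeneous if for any two `n`-sized subsets `A`, `B` of `X`
and any bijection `h : A → B` there is a self-homeomorphism of `X` restricting to `h` on `A`. -/
def StronglyNHomogeneous (X : Type*) [TopologicalSpace X] (n : ℕ) : Prop :=
  ∀ A B : Set X, A.ncard = n → B.ncard = n → ∀ h : X → X, Set.BijOn h A B →
    ∃ f : X ≃ₜ X, Set.EqOn (⇑f) h A

/-!
Composition is discontinuous at every pair `(f₀, g₀)`. Fix a point `x` and some
`a ≠ f₀ (g₀ x)`. A basic neighbourhood of `f₀` constrains its members only on a finite set `I`, so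
at a point outside `I` they may take any value. The points `g x`, for `g` in a neighbourhood of
`g₀`, fill a neighbourhood of `g₀ x`, which is infinite; hence some such `g` has `g x ∉ I`, and then
some `f` close to `f₀` sends `g x` to `a`. So `f (g x) = a` occurs for `f` and `g` arbitrarily close
to `f₀` and `g₀`.
-/

theorem exists_injOn_insert_apply_eq_and_mem_of_infinite {α β : Type*} {s : Set α} (hs : s.Finite)
    {u : α → Set β} (hu : ∀ y ∈ s, (u y).Infinite) {p : α} (hp : p ∉ s) (q : β) :
    ∃ h : α → β, Set.InjOn h (insert p s) ∧ h p = q ∧ ∀ y ∈ s, h y ∈ u y := by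
  classical
  induction s, hs using Set.Finite.induction_on with
  | empty => exact ⟨fun _ => q, by simp, rfl, by simp⟩
  | @insert b s hb hs ih =>
    obtain ⟨hpb, hps⟩ : p ≠ b ∧ p ∉ s := by simpa only [Set.mem_insert_iff, not_or] using hp
    obtain ⟨h, h_inj, h_p, h_mem⟩ := ih (fun y hy => hu y (.inr hy)) hps
    obtain ⟨c, hcu, hc⟩ := ((hu b (.inl rfl)).sdiff ((hs.insert p).image h)).nonempty
    have hbps : b ∉ insert p s := by simp [hpb.symm, hb]
    have h_eqOn : Set.EqOn (Function.update h b c) h (insert p s) := fun y hy =>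
      Function.update_of_ne (ne_of_mem_of_not_mem hy hbps) c h
    refine ⟨Function.update h b c, ?_, (h_eqOn (.inl rfl)).trans h_p, ?_⟩
    · rw [Set.insert_comm, Set.injOn_insert hbps, h_eqOn.injOn_iff, h_eqOn.image_eq,
        Function.update_self]
      exact ⟨h_inj, hc⟩
    · rintro y (rfl | hy)
      · rwa [Function.update_self]
      · rw [h_eqOn (.inr hy)]
        exact h_mem y hy

section Homeomorphisms

variable {X : Type*} [TopologicalSpace X]

theorem exists_homeomorph_eqOn_of_injOn (hhom : ∀ n : ℕ, 0 < n → StronglyNHomogeneous X n)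
    {A : Set X} (hA : A.Finite) (hA_ne : A.Nonempty) {h : X → X} (hh : Set.InjOn h A) :
    ∃ f : X ≃ₜ X, Set.EqOn f h A :=
  hhom A.ncard ((Set.ncard_pos hA).2 hA_ne) A (h '' A) rfl hh.ncard_image h hh.bijOn_image

theorem exists_homeomorph_apply_eq_and_mem_of_infinite
    (hhom : ∀ n : ℕ, 0 < n → StronglyNHomogeneous X n) {I : Set X} (hI : I.Finite)
    {u : X → Set X} (hu : ∀ y ∈ I, (u y).Infinite) {p : X} (hp : p ∉ I) (q : X) :
    ∃ f : X ≃ₜ X, f p = q ∧ ∀ y ∈ I, f y ∈ u y := by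
  obtain ⟨h, h_inj, h_p, h_mem⟩ := exists_injOn_insert_apply_eq_and_mem_of_infinite hI hu hp q
  obtain ⟨f, hf⟩ :=
    exists_homeomorph_eqOn_of_injOn hhom (hI.insert p) (Set.insert_nonempty p I) h_inj
  exact ⟨f, (hf (.inl rfl)).trans h_p, fun y hy => hf (.inr hy) ▸ h_mem y hy⟩

theorem perfectSpace_of_forall_not_isOpen_singleton
    (hiso : ∀ x : X, ¬ IsOpen ({x} : Set X)) : PerfectSpace X :=
  perfectSpace_iff_forall_not_isolated.2 fun x =>
    ⟨fun h => hiso x ((isOpen_singleton_iff_punctured_nhds x).2 h)⟩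

attribute [local instance] homPTop

theorem continuous_homP_eval (x : X) : Continuous fun f : X ≃ₜ X => f x :=
  (continuous_apply x).comp continuous_induced_dom

theorem exists_finite_forall_mem_of_mem_nhds_homP {f₀ : X ≃ₜ X} {N : Set (X ≃ₜ X)}
    (hN : N ∈ 𝓝 f₀) :
    ∃ I : Set X, I.Finite ∧ ∃ u : X → Set X, (∀ y, u y ∈ 𝓝 (f₀ y)) ∧
      ∀ f : X ≃ₜ X, (∀ y ∈ I, f y ∈ u y) → f ∈ N := by
  obtain ⟨O, hO, hON⟩ := (mem_nhds_induced _ _ _).1 hN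
  rw [nhds_pi, Filter.mem_pi] at hO
  obtain ⟨I, hI, u, hu, huO⟩ := hO
  exact ⟨I, hI, u, hu, fun f hf => hON (huO hf)⟩

variable [T1Space X] [PerfectSpace X]

theorem exists_finite_forall_notMem_exists_apply_eq
    (hhom : ∀ n : ℕ, 0 < n → StronglyNHomogeneous X n) {f₀ : X ≃ₜ X} {N : Set (X ≃ₜ X)}
    (hN : N ∈ 𝓝 f₀) :
    ∃ I : Set X, I.Finite ∧ ∀ p ∉ I, ∀ q, ∃ f ∈ N, f p = q := by
  obtain ⟨I, hI, u, hu, huN⟩ := exists_finite_forall_mem_of_mem_nhds_homP hN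
  refine ⟨I, hI, fun p hp q => ?_⟩
  obtain ⟨f, hfp, hfu⟩ := exists_homeomorph_apply_eq_and_mem_of_infinite hhom hI
    (fun y _ => infinite_of_mem_nhds _ (hu y)) hp q
  exact ⟨f, huN f hfu, hfp⟩

theorem isOpenMap_homP_eval (hhom : ∀ n : ℕ, 0 < n → StronglyNHomogeneous X n) (x : X) :
    IsOpenMap fun f : X ≃ₜ X => f x := by
  refine IsOpenMap.of_nhds_le fun f₀ => Filter.le_map fun N hN => ?_
  obtain ⟨I, hI, u, hu, huN⟩ := exists_finite_forall_mem_of_mem_nhds_homP hN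
  filter_upwards [hu x] with q hq
  obtain ⟨f, hfx, hfu⟩ := exists_homeomorph_apply_eq_and_mem_of_infinite hhom
    (hI.subset Set.sdiff_subset) (fun y _ => infinite_of_mem_nhds _ (hu y))
    (Set.notMem_sdiff_of_mem (Set.mem_singleton x)) q
  refine ⟨f, huN f fun y hy => ?_, hfx⟩
  obtain rfl | hyx := eq_or_ne y x
  · rwa [hfx]
  · exact hfu y ⟨hy, hyx⟩

theorem homP_not_topologicalGroup_of_stronglyNHomogeneous_general [Nonempty X]
    (hhom : ∀ n : ℕ, 0 < n → StronglyNHomogeneous X n) (f₀ g₀ : X ≃ₜ X) :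
    ¬ ContinuousAt (fun p : (X ≃ₜ X) × (X ≃ₜ X) => p.2.trans p.1) (f₀, g₀) := by
  intro hcomp
  obtain ⟨x⟩ := ‹Nonempty X›
  obtain ⟨a, ha⟩ : ∃ a, a ≠ f₀ (g₀ x) :=
    (PerfectSpace.not_isolated (f₀ (g₀ x))).nonempty_of_mem self_mem_nhdsWithin
  have h_avoid : ∀ᶠ p : (X ≃ₜ X) × (X ≃ₜ X) in 𝓝 (f₀, g₀), p.1 (p.2 x) ≠ a :=
    ((continuous_homP_eval x).continuousAt.comp hcomp).eventually_ne ha.symm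
  obtain ⟨N, hN, M, hM, hNM⟩ := mem_nhds_prod_iff.1 h_avoid
  obtain ⟨I, hI, hNI⟩ := exists_finite_forall_notMem_exists_apply_eq hhom hN
  have h_orbit : (fun g : X ≃ₜ X => g x) '' M ∈ 𝓝 (g₀ x) :=
    (isOpenMap_homP_eval hhom x).image_mem_nhds hM
  obtain ⟨_, ⟨g, hgM, rfl⟩, hgI⟩ := ((infinite_of_mem_nhds _ h_orbit).sdiff hI).nonempty
  obtain ⟨f, hfN, hfa⟩ := hNI (g x) hgI a
  exact hNM (Set.mk_mem_prod hfN hgM) hfa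

end Homeomorphisms

/-- If a nonempty Tychonoff space `X` has no isolated points and is strongly `n`-homogeneous
for every positive `n`, then `Hom_p(X)` is not a topological group: it is not the case that
composition is jointly continuous and inversion is continuous. -/
theorem homP_not_topologicalGroup_of_stronglyNHomogeneous
    {X : Type*} [TopologicalSpace X] [T1Space X] [CompletelyRegularSpace X] [Nonempty X]
    (hiso : ∀ x : X, ¬ IsOpen ({x} : Set X))
    (hhom : ∀ n : ℕ, 0 < n → StronglyNHomogeneous X n) :
    ¬ (Continuous[@instTopologicalSpaceProd _ _ (homPTop X) (homPTop X), homPTop X]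
          (fun p : (X ≃ₜ X) × (X ≃ₜ X) => p.2.trans p.1) ∧
       Continuous[homPTop X, homPTop X] (fun f : X ≃ₜ X => f.symm)) := by
  let := homPTop X
  have := perfectSpace_of_forall_not_isOpen_singleton hiso
  exact fun ⟨hcomp, _⟩ =>
    homP_not_topologicalGroup_of_stronglyNHomogeneous_general hhom (.refl X) (.refl X)
      hcomp.continuousAt
end

section
/- Let X be a topological space and XI its Alexandroff Noodles. For every self-homeomorphism f of X, the map g : XI → XI defined by g(r_x) = r_{f(x)} for all x ∈ X and r ∈ [0,1] is a self-homeomorphism of XI satisfying g(0_x) = 0_{f(x)} for all x ∈ X; in particular, every self-homeomorphism of X extends to a self-homeomorphism of XI. -/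
open Topology unitInterval

/-- The canonical projection sending `Sum.inl x` to `(x, 0)` and `Sum.inr p` to `p`;
its kernel is exactly the equivalence relation identifying each `x ∈ X` with `(x, 0)`. -/
def noodleProj (X : Type*) : X ⊕ (X × unitInterval) → X × unitInterval
  | Sum.inl x => (x, 0)
  | Sum.inr p => p

/-- The equivalence relation on `X ⊕ (X × [0,1])` identifying each `x ∈ X` with `(x, 0)`. -/
def noodleSetoid (X : Type*) : Setoid (X ⊕ (X × unitInterval)) := Setoid.ker (noodleProj X)

/-- The Alexandroff Noodles of `X`: the quotient of the sum of `X` and `D × [0,1]`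
(`D` the underlying set of `X`) identifying each `x ∈ X` with `(x, 0)`. -/
def Noodles (X : Type*) : Type _ := Quotient (noodleSetoid X)

/-- The topology of the sum of `X` and `D × [0,1]`, where `D` is the underlying set of `X`
with the discrete topology. -/
def noodleSumTop (X : Type*) [t : TopologicalSpace X] :
    TopologicalSpace (X ⊕ (X × unitInterval)) :=
  @instTopologicalSpaceSum X (X × unitInterval) t
    (@instTopologicalSpaceProd X unitInterval ⊥ inferInstance)

/-- The Alexandroff Noodles carry the quotient topology. -/
instance noodlesTop (X : Type*) [TopologicalSpace X] : TopologicalSpace (Noodles X) :=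
  (noodleSumTop X).coinduced (Quotient.mk (noodleSetoid X))

/-- The point `r_x` of the Alexandroff Noodles, for `x ∈ X` and `r ∈ [0,1]`
(so `0_x` is `noodlePt x 0`, the common image of `x` and `(x, 0)`). -/
def noodlePt {X : Type*} (x : X) (r : unitInterval) : Noodles X :=
  Quotient.mk (noodleSetoid X) (Sum.inr (x, r))

namespace Noodles

variable {X Y Z : Type*}

theorem mk_inl (x : X) : (Quotient.mk (noodleSetoid X) (Sum.inl x) : Noodles X) = noodlePt x 0 :=
  Quotient.sound rfl

@[elab_as_elim]
theorem ind {p : Noodles X → Prop} (h : ∀ x r, p (noodlePt x r)) (a : Noodles X) : p a := by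
  induction a using Quotient.inductionOn with
  | h s =>
    rcases s with x | ⟨x, r⟩
    · exact mk_inl x ▸ h x 0
    · exact h x r

/-- The coordinates `(x, r)` of the point `r_x`, through which functions on the Alexandroff
Noodles can be defined without choosing representatives. -/
def coords : Noodles X → X × unitInterval :=
  Setoid.kerLift (noodleProj X)

/-- The action of the Alexandroff Noodles on functions, sending `r_x` to `r_{f(x)}`. -/
def map (f : X → Y) (a : Noodles X) : Noodles Y :=
  noodlePt (f a.coords.1) a.coords.2

theorem map_noodlePt (f : X → Y) (x : X) (r : unitInterval) :
    map f (noodlePt x r) = noodlePt (f x) r :=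
  rfl

theorem map_leftInverse {f : X → Y} {g : Y → X} (h : Function.LeftInverse g f) :
    Function.LeftInverse (map g) (map f) :=
  ind fun x r => by rw [map_noodlePt, map_noodlePt, h x]

variable [TopologicalSpace X] [TopologicalSpace Y] [TopologicalSpace Z]

theorem continuous_iff {φ : Noodles X → Z} :
    Continuous φ ↔
      Continuous (fun x => φ (noodlePt x 0)) ∧ ∀ x, Continuous fun r => φ (noodlePt x r) := by
  have continuous_iff_sum : Continuous φ ↔
      Continuous[noodleSumTop X, _] (φ ∘ Quotient.mk (noodleSetoid X)) :=
    continuous_coinduced_dom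
  have comp_inl : (φ ∘ Quotient.mk (noodleSetoid X)) ∘ Sum.inl = fun x => φ (noodlePt x 0) :=
    funext fun x => congrArg φ (mk_inl x)
  rw [continuous_iff_sum, noodleSumTop, @continuous_sum_dom, comp_inl]
  -- From here on `X` stands for the discrete factor `D` of `D × [0,1]`.
  let _ : TopologicalSpace X := ⊥
  have : DiscreteTopology X := ⟨rfl⟩
  exact and_congr_right' continuous_prod_of_discrete_left

theorem continuous_noodlePt_zero : Continuous fun x : X => noodlePt x 0 :=
  (continuous_iff.1 continuous_id).1

theorem continuous_noodlePt (x : X) : Continuous (noodlePt x) :=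
  (continuous_iff.1 continuous_id).2 x

theorem continuous_map {f : X → Y} (hf : Continuous f) : Continuous (map f) :=
  continuous_iff.2 ⟨continuous_noodlePt_zero.comp hf, fun x => continuous_noodlePt (f x)⟩

/-- The homeomorphism of Alexandroff Noodles induced by a homeomorphism of the base spaces. -/
def homeomorphCongr (f : X ≃ₜ Y) : Noodles X ≃ₜ Noodles Y where
  toFun := map f
  invFun := map f.symm
  left_inv := map_leftInverse f.symm_apply_apply
  right_inv := map_leftInverse f.apply_symm_apply
  continuous_toFun := continuous_map f.continuous
  continuous_invFun := continuous_map f.symm.continuous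

end Noodles

theorem noodles_homeomorph_extension_general {X Y : Type*} [TopologicalSpace X]
    [TopologicalSpace Y] (f : X ≃ₜ Y) :
    ∃ g : Noodles X ≃ₜ Noodles Y,
      ∀ (x : X) (r : unitInterval), g (noodlePt x r) = noodlePt (f x) r :=
  ⟨Noodles.homeomorphCongr f, Noodles.map_noodlePt f⟩

/-- Every self-homeomorphism `f` of `X` extends to a self-homeomorphism `g` of the
Alexandroff Noodles `XI`, given by `g(r_x) = r_{f(x)}`; in particular `g(0_x) = 0_{f(x)}`. -/
theorem noodles_homeomorph_extension {X : Type*} [TopologicalSpace X] (f : X ≃ₜ X) :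
    ∃ g : Noodles X ≃ₜ Noodles X,
      (∀ (x : X) (r : unitInterval), g (noodlePt x r) = noodlePt (f x) r) ∧
      (∀ x : X, g (noodlePt x 0) = noodlePt (f x) 0) := by
  obtain ⟨g, hg⟩ := noodles_homeomorph_extension_general f
  exact ⟨g, hg, fun x => hg x 0⟩
end

section
/- Let X be a Tychonoff (completely regular T1) space with no isolated points such that Hom_p(X) is a topological group. Then for every subset Y ⊆ X, Hom_p(XY') is a topological group, where XY' is the partial Alexandroff double of X over Y. -/
open Topology

/-- `Hom_p(Y)` is a topological group: composition is jointly continuous and inversion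
is continuous, with respect to the topology of pointwise convergence. -/
def IsTopGroupHomP (Y : Type*) [TopologicalSpace Y] : Prop :=
  Continuous[@instTopologicalSpaceProd _ _ (homPTop Y) (homPTop Y), homPTop Y]
      (fun p : (Y ≃ₜ Y) × (Y ≃ₜ Y) => p.2.trans p.1) ∧
  Continuous[homPTop Y, homPTop Y] (fun f : Y ≃ₜ Y => f.symm)

/-- The topology of the partial Alexandroff double `XY'` of `X` over `Y ⊆ X`: on the
underlying set `X ⊕ Y`, the topology generated by all singletons `{y'}` for `y ∈ Y`
together with all sets `(U ∪ (U ∩ Y)') \ F'` for `U` open in `X` and `F'` a finite set of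
points of the second summand. -/
def adDoubleTop (X : Type*) [TopologicalSpace X] (Y : Set X) :
    TopologicalSpace (X ⊕ Y) :=
  TopologicalSpace.generateFrom
    ({S | ∃ y : Y, S = {Sum.inr y}} ∪
     {S | ∃ (U : Set X) (F : Set (X ⊕ Y)), IsOpen U ∧ F.Finite ∧ F ⊆ Set.range Sum.inr ∧
        S = ((Sum.inl '' U) ∪ (Sum.inr '' {y : Y | (y : X) ∈ U})) \ F})

/-!
Every homeomorphism preserves the set of isolated points. On evaluations at isolated points,
pointwise convergence is eventual equality, so composition and inversion are continuous there
for any space. If the non-isolated points of `Z` form a copy of `X`, then homeomorphisms of `Z`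
restrict to `X`, the restriction is continuous for pointwise convergence, and evaluations at
non-isolated points are handled by the topological group `Hom_p(X)`. When `X` has no isolated
points, the non-isolated points of `XY'` are exactly the points of the first summand.
-/

section PointwiseConvergence

variable {Z A : Type*} [TopologicalSpace Z] [TopologicalSpace A]

theorem continuous_homPTop_iff {F : A → (Z ≃ₜ Z)} :
    Continuous[_, homPTop Z] F ↔ ∀ z, Continuous fun a => F a z :=
  continuous_induced_rng.trans continuous_pi_iff

theorem continuous_homPTop_apply (z : Z) :
    Continuous[homPTop Z, _] fun f : Z ≃ₜ Z => f z :=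
  let := homPTop Z
  continuous_homPTop_iff.1 continuous_id z

theorem isOpen_singleton_homeomorph_apply_iff (f : Z ≃ₜ Z) {z : Z} :
    IsOpen {f z} ↔ IsOpen {z} := by
  rw [← Set.image_singleton, f.isOpen_image]

theorem eventually_homPTop_apply_eq (f : Z ≃ₜ Z) {z : Z} (hz : IsOpen {z}) :
    ∀ᶠ g in @nhds _ (homPTop Z) f, g z = f z :=
  let := homPTop Z
  (continuous_homPTop_apply z).continuousAt.eventually
    (((isOpen_singleton_homeomorph_apply_iff f).2 hz).mem_nhds rfl)

theorem continuous_homPTop_comp_apply_of_isOpen_singleton {z : Z} (hz : IsOpen {z}) :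
    Continuous[@instTopologicalSpaceProd _ _ (homPTop Z) (homPTop Z), _]
      fun p : (Z ≃ₜ Z) × (Z ≃ₜ Z) => p.1 (p.2 z) := by
  let := homPTop Z
  refine continuous_iff_continuousAt.2 fun ⟨f, g⟩ => tendsto_const_nhds.congr' ?_
  have hgz : IsOpen {g z} := (isOpen_singleton_homeomorph_apply_iff g).2 hz
  rw [nhds_prod_eq]
  filter_upwards [(eventually_homPTop_apply_eq f hgz).prod_mk
    (eventually_homPTop_apply_eq g hz)] with p ⟨hp₁, hp₂⟩
  rw [hp₂, hp₁]

theorem continuous_homPTop_symm_apply_of_isOpen_singleton {z : Z} (hz : IsOpen {z}) :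
    Continuous[homPTop Z, _] fun f : Z ≃ₜ Z => f.symm z := by
  let := homPTop Z
  refine continuous_iff_continuousAt.2 fun f => tendsto_const_nhds.congr' ?_
  have hfz : IsOpen {f.symm z} := (isOpen_singleton_homeomorph_apply_iff f.symm).2 hz
  filter_upwards [eventually_homPTop_apply_eq f hfz] with g hg
  rw [g.eq_symm_apply, hg, f.apply_symm_apply]

end PointwiseConvergence

section Restriction

variable {X Z : Type*} [TopologicalSpace X] [TopologicalSpace Z] {i : X → Z}

/-- A subset of `Z` that every self-homeomorphism of `Z` maps onto itself, so that
self-homeomorphisms of `Z` restrict to it. -/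
def IsHomeomorphInvariant (S : Set Z) : Prop :=
  ∀ (f : Z ≃ₜ Z) (z : Z), z ∈ S ↔ f z ∈ S

theorem isHomeomorphInvariant_nonisolated :
    IsHomeomorphInvariant {z : Z | ¬ IsOpen {z}} :=
  fun f _ => not_congr (isOpen_singleton_homeomorph_apply_iff f).symm

/-- The self-homeomorphism of `X` induced by a self-homeomorphism `f` of `Z`, where `i` embeds
`X` onto an invariant subset of `Z`. -/
noncomputable def restrictHomeomorph (hi : IsEmbedding i)
    (hinv : IsHomeomorphInvariant (Set.range i)) (f : Z ≃ₜ Z) : X ≃ₜ X :=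
  (hi.toHomeomorph.trans (f.subtype (hinv f))).trans hi.toHomeomorph.symm

theorem apply_restrictHomeomorph (hi : IsEmbedding i)
    (hinv : IsHomeomorphInvariant (Set.range i)) (f : Z ≃ₜ Z) (x : X) :
    i (restrictHomeomorph hi hinv f x) = f (i x) :=
  congrArg Subtype.val (hi.toHomeomorph.apply_symm_apply (f.subtype (hinv f) ⟨i x, x, rfl⟩))

theorem apply_restrictHomeomorph_symm (hi : IsEmbedding i)
    (hinv : IsHomeomorphInvariant (Set.range i)) (f : Z ≃ₜ Z) (x : X) :
    i ((restrictHomeomorph hi hinv f).symm x) = f.symm (i x) := by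
  rw [f.eq_symm_apply, ← apply_restrictHomeomorph hi hinv, Homeomorph.apply_symm_apply]

theorem continuous_restrictHomeomorph (hi : IsEmbedding i)
    (hinv : IsHomeomorphInvariant (Set.range i)) :
    Continuous[homPTop Z, homPTop X] (restrictHomeomorph hi hinv) := by
  let := homPTop Z
  refine continuous_homPTop_iff.2 fun x => hi.continuous_iff.2 ?_
  exact (continuous_homPTop_apply (i x)).congr fun f =>
    (apply_restrictHomeomorph hi hinv f x).symm

theorem IsTopGroupHomP.continuous_comp_apply_embedding (hX : IsTopGroupHomP X)
    (hi : IsEmbedding i) (hinv : IsHomeomorphInvariant (Set.range i)) (x : X) :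
    Continuous[@instTopologicalSpaceProd _ _ (homPTop Z) (homPTop Z), _]
      fun p : (Z ≃ₜ Z) × (Z ≃ₜ Z) => p.1 (p.2 (i x)) := by
  let := homPTop Z
  let := homPTop X
  have hres := continuous_restrictHomeomorph hi hinv
  have hcomp := continuous_homPTop_iff.1 (hX.1.comp (hres.prodMap hres)) x
  refine (hi.continuous.comp hcomp).congr fun p => ?_
  simp [apply_restrictHomeomorph]

theorem IsTopGroupHomP.continuous_symm_apply_embedding (hX : IsTopGroupHomP X)
    (hi : IsEmbedding i) (hinv : IsHomeomorphInvariant (Set.range i)) (x : X) :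
    Continuous[homPTop Z, _] fun f : Z ≃ₜ Z => f.symm (i x) := by
  let := homPTop Z
  let := homPTop X
  have hsymm := continuous_homPTop_iff.1 (hX.2.comp (continuous_restrictHomeomorph hi hinv)) x
  exact (hi.continuous.comp hsymm).congr fun f => apply_restrictHomeomorph_symm hi hinv f x

theorem IsTopGroupHomP.of_isEmbedding_nonisolated (hi : IsEmbedding i)
    (hrange : Set.range i = {z | ¬ IsOpen {z}}) (hX : IsTopGroupHomP X) : IsTopGroupHomP Z := by
  have hinv : IsHomeomorphInvariant (Set.range i) := hrange ▸ isHomeomorphInvariant_nonisolated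
  have isolated_or_range : ∀ z, IsOpen {z} ∨ z ∈ Set.range i := by
    simp [hrange, em]
  let := homPTop Z
  refine ⟨continuous_homPTop_iff.2 fun z => ?_, continuous_homPTop_iff.2 fun z => ?_⟩
  · obtain hz | ⟨x, rfl⟩ := isolated_or_range z
    · exact continuous_homPTop_comp_apply_of_isOpen_singleton hz
    · exact hX.continuous_comp_apply_embedding hi hinv x
  · obtain hz | ⟨x, rfl⟩ := isolated_or_range z
    · exact continuous_homPTop_symm_apply_of_isOpen_singleton hz
    · exact hX.continuous_symm_apply_embedding hi hinv x

end Restriction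

section AlexandroffDouble

variable {X : Type*} [TopologicalSpace X] (Y : Set X)

theorem isOpen_adDoubleTop_singleton_inr (y : Y) :
    IsOpen[adDoubleTop X Y] {Sum.inr y} :=
  TopologicalSpace.isOpen_generateFrom_of_mem (Or.inl ⟨y, rfl⟩)

theorem isOpen_adDoubleTop_double {U : Set X} (hU : IsOpen U) :
    IsOpen[adDoubleTop X Y] (Sum.inl '' U ∪ Sum.inr '' {y : Y | (y : X) ∈ U}) :=
  TopologicalSpace.isOpen_generateFrom_of_mem
    (Or.inr ⟨U, ∅, hU, Set.finite_empty, Set.empty_subset _, Set.sdiff_empty.symm⟩)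

theorem continuous_adDoubleTop_inl :
    Continuous[_, adDoubleTop X Y] (Sum.inl : X → X ⊕ Y) := by
  refine continuous_generateFrom_iff.2 ?_
  rintro _ (⟨y, rfl⟩ | ⟨U, F, hU, -, hF, rfl⟩)
  · simp [Set.preimage, isOpen_empty]
  · have inl_notMem (x : X) : Sum.inl x ∉ F := fun hx => by simpa using hF hx
    simpa [Set.preimage, inl_notMem] using hU

theorem isEmbedding_adDoubleTop_inl :
    @IsEmbedding _ _ _ (adDoubleTop X Y) (Sum.inl : X → X ⊕ Y) := by
  let := adDoubleTop X Y
  refine ⟨⟨le_antisymm (continuous_adDoubleTop_inl Y).le_induced fun U hU => ?_⟩,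
    Sum.inl_injective⟩
  exact ⟨_, isOpen_adDoubleTop_double Y hU, by ext; simp⟩

theorem range_inl_eq_nonisolated_adDoubleTop (hiso : ∀ x : X, ¬ IsOpen ({x} : Set X)) :
    Set.range (Sum.inl : X → X ⊕ Y) = {z | ¬ IsOpen[adDoubleTop X Y] {z}} := by
  let := adDoubleTop X Y
  ext (x | y)
  · have inl_nonisolated : ¬ IsOpen {(Sum.inl x : X ⊕ Y)} := fun hx =>
      hiso x (by simpa [Set.preimage] using hx.preimage (continuous_adDoubleTop_inl Y))
    simp [inl_nonisolated]
  · simp [isOpen_adDoubleTop_singleton_inr]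

end AlexandroffDouble

theorem adDouble_homP_topologicalGroup_general
    {X : Type*} [TopologicalSpace X] (hiso : ∀ x : X, ¬ IsOpen ({x} : Set X))
    (hX : IsTopGroupHomP X) (Y : Set X) :
    @IsTopGroupHomP (X ⊕ Y) (adDoubleTop X Y) :=
  let := adDoubleTop X Y
  hX.of_isEmbedding_nonisolated (isEmbedding_adDoubleTop_inl Y)
    (range_inl_eq_nonisolated_adDoubleTop Y hiso)

/-- If `X` is a Tychonoff space with no isolated points such that `Hom_p(X)` is a topological
group, then `Hom_p(XY')` is a topological group for every `Y ⊆ X`, where `XY'` is the partial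
Alexandroff double of `X` over `Y`. -/
theorem adDouble_homP_topologicalGroup
    {X : Type*} [TopologicalSpace X] [T1Space X] [CompletelyRegularSpace X]
    (hiso : ∀ x : X, ¬ IsOpen ({x} : Set X))
    (hX : IsTopGroupHomP X) (Y : Set X) :
    @IsTopGroupHomP (X ⊕ Y) (adDoubleTop X Y) :=
  adDouble_homP_topologicalGroup_general hiso hX Y
end
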